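/- Let N ≥ 2 be an integer, p > 1, α = p/(p−1), C̃₀ ≥ 0, and 0 < r ≤ 1/2. Let a > 0 satisfy a^{p−1}(p·a·4^{−α} − N) ≥ C̃₀, and define V : [r/4, r/2] → ℝ by V(s) = (e^{−a(s/r)^α} − e^{−a·2^{−α}}) / (e^{−a·4^{−α}} − e^{−a·2^{−α}}). Then for every s ∈ [r/4, r/2] there holds −|V′(s)|^{p−2} ((p−1)V″(s) + (N−1)V′(s)/s) + C̃₀ V(s)^{p−1} ≤ 0; equivalently, the radial function x ↦ V(|x − x₀|) is a subsolution of −div(|Dv|^{p−2}Dv) + C̃₀ v^{p−1} ≤ 0 on the annulus {x : r/4 ≤ |x − x₀| ≤ r/2} in ℝ^N. -/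

import Mathlib

/-!
Put `t = s / r`, `E = exp (-a t ^ α)`, let `D > 0` be the denominator of the barrier and
`K = a α / (r D)`. Then `V' = -K t ^ (α - 1) E`, and since `(p - 1) α = p` and
`(p - 1) (α - 1) = 1`, the radial second-order term collapses to
`(p - 1) V'' + (N - 1) V' / s = (K E / r) t ^ (α - 2) (p a t ^ α - N)`.
The exponent `α = p / (p - 1)` is chosen so that the powers of `t` cancel against those in
`|V'| ^ (p - 2)`: the radial `p`-Laplacian equals `(K E) ^ (p - 1) / r * (p a t ^ α - N)`.
Since `K E = (E / D) a (α / r)` with `α / r ≥ 1`, `1 / r ≥ 1` and `t ^ α ≥ 4 ^ (-α)`, this is at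
least `(E / D) ^ (p - 1) C₀'`, and `0 ≤ V ≤ E / D` concludes.
-/

open Real

noncomputable section

lemma barrier_hasDerivAt (α r a c D s : ℝ) (hr : 0 < r) (hs : 0 < s) :
    HasDerivAt (fun s : ℝ => (exp (-a * (s / r) ^ α) - c) / D)
      (-(a * α / (r * D)) * ((s / r) ^ (α - 1) * exp (-a * (s / r) ^ α))) s := by
  have ht : s / r ≠ 0 := (div_pos hs hr).ne'
  have h1 : HasDerivAt (fun s : ℝ => s / r) (1 / r) s := (hasDerivAt_id s).div_const r
  have h2 := (((h1.rpow_const (p := α) (Or.inl ht)).const_mul (-a)).exp.sub_const c).div_const D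
  refine h2.congr_deriv ?_
  rw [← div_div]
  ring

lemma barrier_hasDerivAt_deriv (α r a K s : ℝ) (hr : 0 < r) (hs : 0 < s) :
    HasDerivAt (fun s : ℝ => -K * ((s / r) ^ (α - 1) * exp (-a * (s / r) ^ α)))
      (-(K / r) * exp (-a * (s / r) ^ α) *
        ((α - 1) * (s / r) ^ (α - 2) - a * α * ((s / r) ^ (α - 1)) ^ 2)) s := by
  have ht : s / r ≠ 0 := (div_pos hs hr).ne'
  have h1 : HasDerivAt (fun s : ℝ => s / r) (1 / r) s := (hasDerivAt_id s).div_const r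
  have h2 := ((h1.rpow_const (p := α - 1) (Or.inl ht)).mul
    ((h1.rpow_const (p := α) (Or.inl ht)).const_mul (-a)).exp).const_mul (-K)
  refine h2.congr_deriv ?_
  rw [show α - 1 - 1 = α - 2 by ring]
  ring

/-- The radial `p`-Laplacian of a profile with `V' = -K t ^ (α - 1) E`, `t = s / r`, evaluated in
closed form: all powers of `t` outside the last factor cancel because `(p - 1) (α - 1) = 1`. -/
lemma radial_pLaplacian_eq (n p α r a K E t : ℝ) (hp : 1 < p) (hα : α = p / (p - 1))
    (hr : 0 < r) (hK : 0 < K) (hE : 0 < E) (ht : 0 < t) :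
    |-K * (t ^ (α - 1) * E)| ^ (p - 2) *
        ((p - 1) * (-(K / r) * E * ((α - 1) * t ^ (α - 2) - a * α * (t ^ (α - 1)) ^ 2))
          + (n - 1) * (-K * (t ^ (α - 1) * E)) / (r * t))
      = (K * E) ^ (p - 1) / r * (p * a * t ^ α - n) := by
  have hp1 : p - 1 ≠ 0 := by linarith
  have hpα : (p - 1) * α = p := by rw [hα]; field_simp
  have hKE : 0 < K * E := mul_pos hK hE
  have hu1 : t ^ (α - 1) = t ^ (α - 2) * t := by
    rw [← rpow_add_one ht.ne']; congr 1; ring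
  have hu2 : t ^ α = t ^ (α - 2) * t ^ 2 := by
    rw [← rpow_natCast t 2, ← rpow_add ht]; congr 1; push_cast; ring
  have hpow : (t ^ (α - 1)) ^ (p - 2) * t ^ (α - 2) = 1 := by
    rw [← rpow_mul ht.le, ← rpow_add ht,
      show (α - 1) * (p - 2) + (α - 2) = 0 by linear_combination hpα, rpow_zero]
  have habs : |-K * (t ^ (α - 1) * E)| = K * E * t ^ (α - 1) := by
    rw [show -K * (t ^ (α - 1) * E) = -(K * E * t ^ (α - 1)) by ring, abs_neg]
    exact abs_of_pos (mul_pos hKE (rpow_pos_of_pos ht _))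
  have hflux : (p - 1) * (-(K / r) * E * ((α - 1) * t ^ (α - 2) - a * α * (t ^ (α - 1)) ^ 2))
      + (n - 1) * (-K * (t ^ (α - 1) * E)) / (r * t)
      = K * E / r * t ^ (α - 2) * (p * a * t ^ α - n) := by
    rw [hu1, hu2]
    field_simp
    linear_combination (a * t ^ 2 * t ^ (α - 2) - 1) * hpα
  rw [habs, hflux, mul_rpow hKE.le (rpow_pos_of_pos ht _).le,
    show p - 1 = p - 2 + 1 by ring, rpow_add_one hKE.ne']
  linear_combination ((K * E) ^ (p - 2) * (K * E) / r * (p * a * t ^ α - n)) * hpow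

/-- the explicit radial barrier
`V(s) = (e^{−a(s/r)^α} − e^{−a·2^{−α}}) / (e^{−a·4^{−α}} − e^{−a·2^{−α}})`, with
`α = p/(p−1)` and `a^{p−1}(p·a·4^{−α} − N) ≥ C̃₀`, satisfies the differential inequality
`−|V′(s)|^{p−2}((p−1)V″(s) + (N−1)V′(s)/s) + C̃₀·V(s)^{p−1} ≤ 0` on `[r/4, r/2]`,
i.e. `x ↦ V(|x−x₀|)` is a subsolution of `−div(|Dv|^{p−2}Dv) + C̃₀ v^{p−1} ≤ 0`
on the annulus `r/4 ≤ |x−x₀| ≤ r/2`. -/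
theorem stmt5 (N : ℕ) (hN : 2 ≤ N) (p α C₀' r a : ℝ) (hp : 1 < p)
    (hα : α = p / (p - 1)) (hC : 0 ≤ C₀') (hr : 0 < r) (hr' : r ≤ 1 / 2)
    (ha : 0 < a) (haC : C₀' ≤ a ^ (p - 1) * (p * a * 4 ^ (-α) - N))
    (V : ℝ → ℝ)
    (hV : ∀ s : ℝ, V s =
      (exp (-a * (s / r) ^ α) - exp (-a * 2 ^ (-α))) /
        (exp (-a * 4 ^ (-α)) - exp (-a * 2 ^ (-α)))) :
    ∀ s ∈ Set.Icc (r / 4) (r / 2),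
      -|deriv V s| ^ (p - 2) *
          ((p - 1) * deriv (deriv V) s + (N - 1) * deriv V s / s)
        + C₀' * V s ^ (p - 1) ≤ 0 := by
  rintro s ⟨hs1, hs2⟩
  have hs : 0 < s := by linarith
  have hα1 : 1 < α := by rw [hα, lt_div_iff₀ (by linarith)]; linarith
  set c := exp (-a * 2 ^ (-α)) with hc
  set D := exp (-a * 4 ^ (-α)) - c with hDdef
  have hD : 0 < D := by
    have h : (4 : ℝ) ^ (-α) < 2 ^ (-α) :=
      rpow_lt_rpow_of_neg (by norm_num) (by norm_num) (by linarith)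
    have : c < exp (-a * 4 ^ (-α)) := exp_lt_exp.2 (by nlinarith)
    linarith
  obtain rfl : V = fun s => (exp (-a * (s / r) ^ α) - c) / D := funext hV
  set K := a * α / (r * D) with hKdef
  have hK : 0 < K := by positivity
  have hd : ∀ x, 0 < x → deriv (fun s => (exp (-a * (s / r) ^ α) - c) / D) x =
      -K * ((x / r) ^ (α - 1) * exp (-a * (x / r) ^ α)) :=
    fun x hx => (barrier_hasDerivAt α r a c D x hr hx).deriv
  have hdd : deriv (deriv (fun s => (exp (-a * (s / r) ^ α) - c) / D)) s = _ :=
    (Filter.EventuallyEq.deriv_eq ((eventually_gt_nhds hs).mono hd)).trans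
      (barrier_hasDerivAt_deriv α r a K s hr hs).deriv
  rw [hdd, hd s hs]
  have ht : 0 < s / r := div_pos hs hr
  have ht1 : 1 / 4 ≤ s / r := by rw [le_div_iff₀ hr]; linarith
  have ht2 : s / r ≤ 1 / 2 := by rw [div_le_iff₀ hr]; linarith
  have hst : s = r * (s / r) := by field_simp
  beta_reduce
  set t := s / r with htdef
  rw [hst]
  set E := exp (-a * t ^ α) with hEdef
  have hE : 0 < E := exp_pos _
  rw [neg_mul, radial_pLaplacian_eq N p α r a K E t hp hα hr hK hE ht]
  have hq : 0 ≤ p - 1 := by linarith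
  have h4 : (4 : ℝ) ^ (-α) ≤ t ^ α := by
    rw [rpow_neg (by norm_num), ← inv_rpow (by norm_num)]
    exact rpow_le_rpow (by norm_num) (by linarith) (by linarith)
  have h2 : t ^ α ≤ (2 : ℝ) ^ (-α) := by
    rw [rpow_neg (by norm_num), ← inv_rpow (by norm_num)]
    exact rpow_le_rpow ht.le (by linarith) (by linarith)
  have hcE : c ≤ E := exp_le_exp.2 (by nlinarith)
  have hVE : ((E - c) / D) ^ (p - 1) ≤ (E / D) ^ (p - 1) :=
    rpow_le_rpow (div_nonneg (by linarith) hD.le)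
      (div_le_div_of_nonneg_right (by linarith [exp_pos (-a * 2 ^ (-α))]) hD.le) hq
  have hap : 0 < a ^ (p - 1) := rpow_pos_of_pos ha _
  have hB : 0 ≤ p * a * 4 ^ (-α) - N := nonneg_of_mul_nonneg_right (hC.trans haC) hap
  have hBt : p * a * 4 ^ (-α) - N ≤ p * a * t ^ α - N := by gcongr
  have hαr : 1 ≤ (α / r) ^ (p - 1) :=
    one_le_rpow (by rw [le_div_iff₀ hr]; linarith) hq
  have hr1 : 1 ≤ 1 / r := by rw [le_div_iff₀ hr]; linarith
  have hED : 0 < (E / D) ^ (p - 1) := rpow_pos_of_pos (div_pos hE hD) _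
  have hKE : (K * E) ^ (p - 1) = (E / D) ^ (p - 1) * a ^ (p - 1) * (α / r) ^ (p - 1) := by
    rw [← mul_rpow (by positivity) ha.le, ← mul_rpow (by positivity) (by positivity)]
    congr 1
    rw [hKdef]
    field_simp
  have hgain : 1 ≤ (α / r) ^ (p - 1) * (1 / r) := one_le_mul_of_one_le_of_one_le hαr hr1
  have hfinal : C₀' * ((E - c) / D) ^ (p - 1) ≤
      (K * E) ^ (p - 1) / r * (p * a * t ^ α - N) :=
    calc C₀' * ((E - c) / D) ^ (p - 1)
        ≤ (a ^ (p - 1) * (p * a * 4 ^ (-α) - N)) * (E / D) ^ (p - 1) := by gcongr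
      _ ≤ (a ^ (p - 1) * (p * a * t ^ α - N)) * (E / D) ^ (p - 1) := by gcongr
      _ ≤ (a ^ (p - 1) * (p * a * t ^ α - N)) * (E / D) ^ (p - 1)
            * ((α / r) ^ (p - 1) * (1 / r)) :=
          le_mul_of_one_le_right
            (mul_nonneg (mul_nonneg hap.le (hB.trans hBt)) hED.le) hgain
      _ = (K * E) ^ (p - 1) / r * (p * a * t ^ α - N) := by rw [hKE]; ring
  linarith
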